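/- arXiv:2007.03129 — 4 statements merged into one kernel-verified Lean document; each statement's English description precedes it below -/
import Mathlib

section
/- Let (Ω, ℱ, P) be a probability space, γ a finite measurable partition of Ω with P(C) > 0 for every C ∈ γ, and let 𝒜 ⊆ ℬ be sub-σ-algebras of ℱ. If the conditional mutual information I(ℬ; γ | 𝒜) vanishes, then for every C ∈ γ the conditional probabilities agree: P(C | ℬ) = P(C | 𝒜) P-almost everywhere. -/
open MeasureTheory

/-- The conditional probability `P(C | 𝒜)`: the conditional expectation of the
indicator of `C` with respect to the sub-σ-algebra `m`. -/
noncomputable def condProb {Ω : Type*} {m0 : MeasurableSpace Ω} (μ : Measure Ω)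
    (m : MeasurableSpace Ω) (C : Set Ω) : Ω → ℝ :=
  μ[C.indicator (fun _ => (1 : ℝ)) | m]

/-- The mutual information `I(𝒜; γ) = ∑_{C ∈ γ} ∫ P(C|𝒜) log (P(C|𝒜) / P(C)) dP` between a
sub-σ-algebra `m` and a finite measurable partition `γ` (conventions `0 · log 0 = 0`,
`x / 0 = 0`, `log 0 = 0`). -/
noncomputable def mutualInfo {Ω : Type*} {m0 : MeasurableSpace Ω} (μ : Measure Ω)
    (m : MeasurableSpace Ω) (γ : Finset (Set Ω)) : ℝ :=
  ∑ C ∈ γ, ∫ ω, condProb μ m C ω * Real.log (condProb μ m C ω / (μ C).toReal) ∂μ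

/-- The conditional mutual information
`I(ℬ; γ | 𝒜) = ∑_{C ∈ γ} ∫ P(C|ℬ) log (P(C|ℬ) / P(C|𝒜)) dP` (with the same conventions,
so that the integrand is `0` where `P(C|𝒜)` vanishes). -/
noncomputable def condMutualInfo {Ω : Type*} {m0 : MeasurableSpace Ω} (μ : Measure Ω)
    (mA mB : MeasurableSpace Ω) (γ : Finset (Set Ω)) : ℝ :=
  ∑ C ∈ γ, ∫ ω, condProb μ mB C ω *
    Real.log (condProb μ mB C ω / condProb μ mA C ω) ∂μ

/-!
Write `f = P(C|ℬ)` and `g = P(C|𝒜) = E[f|𝒜]`; almost everywhere, `f` vanishes where `g` does. With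
`klFun x = x log x + 1 - x`, it follows that `f log (f / g) = g klFun (f / g) + (f - g)`, where
`f - g` has integral zero and `klFun` is nonnegative on `[0, ∞)`, vanishing only at `1`. Each
summand of the mutual information is therefore nonnegative, and it vanishes only if `f = g` almost
everywhere.

For a Bochner integral this needs `f log (f / g)` to be integrable, although `log g` may be
unbounded. Conditional Jensen makes `f log f` and `g log g` integrable, and since `log g` is
`𝒜`-measurable, `∫ f |log g| = ∫ g |log g|`.
-/

open Filter InformationTheory
open scoped ENNReal

section CondExp

variable {Ω : Type*} {m m0 : MeasurableSpace Ω} {μ : Measure Ω}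

lemma trim_withDensity_condLExp (hm : m ≤ m0) [SigmaFinite (μ.trim hm)] (X : Ω → ℝ≥0∞) :
    (μ.withDensity μ⁻[X | m]).trim hm = (μ.withDensity X).trim hm := by
  refine @Measure.ext _ m _ _ fun s hs ↦ ?_
  rw [trim_measurableSet_eq hm hs, trim_measurableSet_eq hm hs, withDensity_apply _ (hm s hs),
    withDensity_apply _ (hm s hs), setLIntegral_condLExp hm μ X hs]

lemma lintegral_condLExp_mul (hm : m ≤ m0) [SigmaFinite (μ.trim hm)] {X Y : Ω → ℝ≥0∞}
    (hX : AEMeasurable X μ) (hY : Measurable[m] Y) :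
    ∫⁻ ω, μ⁻[X | m] ω * Y ω ∂μ = ∫⁻ ω, X ω * Y ω ∂μ := by
  have hY' : AEMeasurable Y μ := (hY.mono hm le_rfl).aemeasurable
  have hcond : AEMeasurable μ⁻[X | m] μ := (measurable_condLExp' m μ X).aemeasurable
  calc ∫⁻ ω, μ⁻[X | m] ω * Y ω ∂μ
      = ∫⁻ ω, Y ω ∂(μ.withDensity μ⁻[X | m]) :=
        (lintegral_withDensity_eq_lintegral_mul₀ hcond hY').symm
    _ = ∫⁻ ω, Y ω ∂(μ.withDensity X) := by
        rw [← lintegral_trim hm hY, trim_withDensity_condLExp hm, lintegral_trim hm hY]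
    _ = ∫⁻ ω, X ω * Y ω ∂μ := lintegral_withDensity_eq_lintegral_mul₀ hX hY'

lemma integrable_condExp_mul_iff (hm : m ≤ m0) [SigmaFinite (μ.trim hm)] {f g : Ω → ℝ}
    (hf : Integrable f μ) (hf0 : 0 ≤ᵐ[μ] f) (hg : StronglyMeasurable[m] g) :
    Integrable (fun ω ↦ (μ[f | m]) ω * g ω) μ ↔ Integrable (fun ω ↦ f ω * g ω) μ := by
  have hg' : AEStronglyMeasurable g μ := (hg.mono hm).aestronglyMeasurable
  have hlintegral : ∫⁻ ω, ‖(μ[f | m]) ω * g ω‖ₑ ∂μ = ∫⁻ ω, ‖f ω * g ω‖ₑ ∂μ := by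
    calc ∫⁻ ω, ‖(μ[f | m]) ω * g ω‖ₑ ∂μ
        = ∫⁻ ω, μ⁻[fun ω ↦ ENNReal.ofReal (f ω) | m] ω * ‖g ω‖ₑ ∂μ := by
          refine lintegral_congr_ae ?_
          filter_upwards [condLExp_ofReal m hf hf0, condExp_nonneg (m := m) hf0] with ω hω hω0
          rw [hω, enorm_mul, Real.enorm_eq_ofReal hω0]
      _ = ∫⁻ ω, ENNReal.ofReal (f ω) * ‖g ω‖ₑ ∂μ :=
          lintegral_condLExp_mul hm hf.aemeasurable.ennreal_ofReal hg.enorm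
      _ = ∫⁻ ω, ‖f ω * g ω‖ₑ ∂μ := by
          refine lintegral_congr_ae ?_
          filter_upwards [hf0] with ω hω0
          rw [enorm_mul, Real.enorm_eq_ofReal hω0]
  simp only [Integrable, HasFiniteIntegral, hlintegral,
    integrable_condExp.aestronglyMeasurable.fun_mul hg', hf.aestronglyMeasurable.fun_mul hg']

lemma ae_eq_zero_of_condExp_eq_zero (hm : m ≤ m0) [SigmaFinite (μ.trim hm)] {f : Ω → ℝ}
    (hf : Integrable f μ) (hf0 : 0 ≤ᵐ[μ] f) :
    ∀ᵐ ω ∂μ, (μ[f | m]) ω = 0 → f ω = 0 := by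
  have hs : MeasurableSet[m] {ω | (μ[f | m]) ω = 0} :=
    stronglyMeasurable_condExp.measurable (measurableSet_singleton 0)
  have hint : ∫ ω in {ω | (μ[f | m]) ω = 0}, f ω ∂μ = 0 := by
    rw [← setIntegral_condExp hm hf hs]
    exact setIntegral_eq_zero_of_forall_eq_zero fun ω hω ↦ hω
  rw [setIntegral_eq_zero_iff_of_nonneg_ae (ae_restrict_of_ae hf0) hf.integrableOn] at hint
  exact (ae_restrict_iff' (hm _ hs)).1 hint

end CondExp

section Gibbs

lemma mul_klFun_div {a b : ℝ} (h : a = 0 → b = 0) :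
    a * klFun (b / a) = b * Real.log (b / a) - (b - a) := by
  rcases eq_or_ne a 0 with rfl | ha
  · simp [h rfl]
  · rw [klFun_apply]
    field_simp
    ring

lemma mul_klFun_div_eq_zero_iff {a b : ℝ} (ha : 0 ≤ a) (hb : 0 ≤ b) (h : a = 0 → b = 0) :
    a * klFun (b / a) = 0 ↔ b = a := by
  rcases eq_or_ne a 0 with rfl | ha'
  · simp [h rfl]
  · rw [mul_eq_zero_iff_left ha', klFun_eq_zero_iff (div_nonneg hb ha), div_eq_one_iff_eq ha']

variable {Ω : Type*} {m m0 : MeasurableSpace Ω} {μ : Measure Ω} {f : Ω → ℝ}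

lemma integrable_condExp_mul_log_condExp [IsFiniteMeasure μ] (hm : m ≤ m0) (hf : Integrable f μ)
    (hf0 : 0 ≤ᵐ[μ] f) (hflog : Integrable (fun ω ↦ f ω * Real.log (f ω)) μ) :
    Integrable (fun ω ↦ (μ[f | m]) ω * Real.log ((μ[f | m]) ω)) μ := by
  have hjensen := Real.convexOn_mul_log.map_condExp_le hm
    (Real.continuous_mul_log.lowerSemicontinuous.lowerSemicontinuousOn _) hf0 isClosed_Ici hf hflog
  have hlower : μ[f | m] - 1 ≤ᵐ[μ] fun ω ↦ (μ[f | m]) ω * Real.log ((μ[f | m]) ω) := by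
    filter_upwards [condExp_nonneg (m := m) hf0] with ω hω using Real.self_sub_one_le_mul_log hω
  exact integrable_of_le_of_le
    (Real.continuous_mul_log.comp_aestronglyMeasurable integrable_condExp.aestronglyMeasurable)
    hlower hjensen (integrable_condExp.sub (integrable_const 1)) integrable_condExp

lemma integrable_mul_log_div_condExp [IsFiniteMeasure μ] (hm : m ≤ m0) (hf : Integrable f μ)
    (hf0 : 0 ≤ᵐ[μ] f) (hflog : Integrable (fun ω ↦ f ω * Real.log (f ω)) μ) :
    Integrable (fun ω ↦ f ω * Real.log (f ω / (μ[f | m]) ω)) μ := by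
  have hcross : Integrable (fun ω ↦ f ω * Real.log ((μ[f | m]) ω)) μ :=
    (integrable_condExp_mul_iff hm hf hf0
      (Real.measurable_log.comp stronglyMeasurable_condExp.measurable).stronglyMeasurable).1
      (integrable_condExp_mul_log_condExp hm hf hf0 hflog)
  refine (hflog.sub hcross).congr ?_
  filter_upwards [ae_eq_zero_of_condExp_eq_zero hm hf hf0] with ω hω
  rcases eq_or_ne (f ω) 0 with hfω | hfω
  · simp [hfω]
  · rw [Pi.sub_apply, Real.log_div hfω (mt hω hfω), mul_sub]

lemma ae_nonneg_condExp_mul_klFun_div_condExp (hf0 : 0 ≤ᵐ[μ] f) :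
    0 ≤ᵐ[μ] fun ω ↦ (μ[f | m]) ω * klFun (f ω / (μ[f | m]) ω) := by
  filter_upwards [hf0, condExp_nonneg (m := m) hf0] with ω hω hcond
  exact mul_nonneg hcond (klFun_nonneg (div_nonneg hω hcond))

lemma condExp_mul_klFun_div_condExp_ae_eq (hm : m ≤ m0) [SigmaFinite (μ.trim hm)]
    (hf : Integrable f μ) (hf0 : 0 ≤ᵐ[μ] f) :
    (fun ω ↦ (μ[f | m]) ω * klFun (f ω / (μ[f | m]) ω)) =ᵐ[μ]
      (fun ω ↦ f ω * Real.log (f ω / (μ[f | m]) ω)) - (f - μ[f | m]) := by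
  filter_upwards [ae_eq_zero_of_condExp_eq_zero hm hf hf0] with ω hω using mul_klFun_div hω

lemma integral_mul_log_div_condExp (hm : m ≤ m0) [SigmaFinite (μ.trim hm)]
    (hf : Integrable f μ) (hf0 : 0 ≤ᵐ[μ] f)
    (hflog : Integrable (fun ω ↦ f ω * Real.log (f ω / (μ[f | m]) ω)) μ) :
    ∫ ω, f ω * Real.log (f ω / (μ[f | m]) ω) ∂μ =
      ∫ ω, (μ[f | m]) ω * klFun (f ω / (μ[f | m]) ω) ∂μ := by
  rw [integral_congr_ae (condExp_mul_klFun_div_condExp_ae_eq hm hf hf0),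
    integral_sub' hflog (hf.sub integrable_condExp),
    integral_sub' hf integrable_condExp, integral_condExp hm, sub_self, sub_zero]

lemma integral_mul_log_div_condExp_nonneg (hm : m ≤ m0) [SigmaFinite (μ.trim hm)]
    (hf : Integrable f μ) (hf0 : 0 ≤ᵐ[μ] f)
    (hflog : Integrable (fun ω ↦ f ω * Real.log (f ω / (μ[f | m]) ω)) μ) :
    0 ≤ ∫ ω, f ω * Real.log (f ω / (μ[f | m]) ω) ∂μ := by
  rw [integral_mul_log_div_condExp hm hf hf0 hflog]
  exact integral_nonneg_of_ae (ae_nonneg_condExp_mul_klFun_div_condExp hf0)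

lemma integral_mul_log_div_condExp_eq_zero_iff (hm : m ≤ m0) [SigmaFinite (μ.trim hm)]
    (hf : Integrable f μ) (hf0 : 0 ≤ᵐ[μ] f)
    (hflog : Integrable (fun ω ↦ f ω * Real.log (f ω / (μ[f | m]) ω)) μ) :
    ∫ ω, f ω * Real.log (f ω / (μ[f | m]) ω) ∂μ = 0 ↔ f =ᵐ[μ] μ[f | m] := by
  have hint : Integrable (fun ω ↦ (μ[f | m]) ω * klFun (f ω / (μ[f | m]) ω)) μ :=
    (hflog.sub (hf.sub integrable_condExp)).congr
      (condExp_mul_klFun_div_condExp_ae_eq hm hf hf0).symm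
  rw [integral_mul_log_div_condExp hm hf hf0 hflog,
    integral_eq_zero_iff_of_nonneg_ae (ae_nonneg_condExp_mul_klFun_div_condExp hf0) hint]
  refine eventually_congr ?_
  filter_upwards [hf0, condExp_nonneg (m := m) hf0, ae_eq_zero_of_condExp_eq_zero hm hf hf0]
    with ω hω hcond hzero using mul_klFun_div_eq_zero_iff hcond hω hzero

end Gibbs

section CondProb

variable {Ω : Type*} {m0 : MeasurableSpace Ω} {μ : Measure Ω} {C : Set Ω}

lemma condProb_nonneg (m : MeasurableSpace Ω) : 0 ≤ᵐ[μ] condProb μ m C :=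
  condExp_nonneg (ae_of_all _ (Set.indicator_nonneg fun _ _ ↦ zero_le_one))

lemma integrable_condProb (m : MeasurableSpace Ω) : Integrable (condProb μ m C) μ :=
  integrable_condExp

lemma condExp_condProb {mA mB : MeasurableSpace Ω} (hAB : mA ≤ mB) (hB : mB ≤ m0)
    [SigmaFinite (μ.trim hB)] : μ[condProb μ mB C | mA] =ᵐ[μ] condProb μ mA C :=
  condExp_condExp_of_le hAB hB

variable [IsFiniteMeasure μ]

lemma integrable_condProb_mul_log_condProb {m : MeasurableSpace Ω} (hm : m ≤ m0)
    (hC : MeasurableSet[m0] C) :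
    Integrable (fun ω ↦ condProb μ m C ω * Real.log (condProb μ m C ω)) μ := by
  have hmul_log (ω : Ω) :
      C.indicator (fun _ ↦ (1 : ℝ)) ω * Real.log (C.indicator (fun _ ↦ 1) ω) = 0 := by
    by_cases hω : ω ∈ C <;> simp [hω]
  refine integrable_condExp_mul_log_condExp hm ((integrable_const 1).indicator hC)
    (ae_of_all _ (Set.indicator_nonneg fun _ _ ↦ zero_le_one)) ?_
  simpa only [hmul_log] using integrable_const (0 : ℝ)

variable {mA mB : MeasurableSpace Ω}

lemma integrable_condProb_mul_log_div_condExp (hAB : mA ≤ mB) (hB : mB ≤ m0)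
    (hC : MeasurableSet[m0] C) :
    Integrable (fun ω ↦ condProb μ mB C ω *
      Real.log (condProb μ mB C ω / (μ[condProb μ mB C | mA]) ω)) μ :=
  integrable_mul_log_div_condExp (hAB.trans hB) (integrable_condProb mB) (condProb_nonneg mB)
    (integrable_condProb_mul_log_condProb hB hC)

lemma integral_condProb_mul_log_div (hAB : mA ≤ mB) (hB : mB ≤ m0) :
    ∫ ω, condProb μ mB C ω * Real.log (condProb μ mB C ω / condProb μ mA C ω) ∂μ =
      ∫ ω, condProb μ mB C ω *
        Real.log (condProb μ mB C ω / (μ[condProb μ mB C | mA]) ω) ∂μ := by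
  refine integral_congr_ae ?_
  filter_upwards [condExp_condProb (C := C) hAB hB] with ω hω
  rw [hω]

lemma integral_condProb_mul_log_div_nonneg (hAB : mA ≤ mB) (hB : mB ≤ m0)
    (hC : MeasurableSet[m0] C) :
    0 ≤ ∫ ω, condProb μ mB C ω * Real.log (condProb μ mB C ω / condProb μ mA C ω) ∂μ := by
  rw [integral_condProb_mul_log_div hAB hB]
  exact integral_mul_log_div_condExp_nonneg (hAB.trans hB) (integrable_condProb mB)
    (condProb_nonneg mB) (integrable_condProb_mul_log_div_condExp hAB hB hC)

lemma integral_condProb_mul_log_div_eq_zero_iff (hAB : mA ≤ mB) (hB : mB ≤ m0)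
    (hC : MeasurableSet[m0] C) :
    ∫ ω, condProb μ mB C ω * Real.log (condProb μ mB C ω / condProb μ mA C ω) ∂μ = 0 ↔
      condProb μ mB C =ᵐ[μ] condProb μ mA C := by
  rw [integral_condProb_mul_log_div hAB hB,
    integral_mul_log_div_condExp_eq_zero_iff (hAB.trans hB) (integrable_condProb mB)
      (condProb_nonneg mB) (integrable_condProb_mul_log_div_condExp hAB hB hC)]
  exact (condExp_condProb hAB hB).congr_right

end CondProb

theorem condProb_ae_eq_of_condMutualInfo_eq_zero_general {Ω : Type*} {m0 : MeasurableSpace Ω}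
    (μ : Measure Ω) [IsFiniteMeasure μ]
    (γ : Finset (Set Ω))
    (hγmeas : ∀ C ∈ γ, MeasurableSet[m0] C)
    (mA mB : MeasurableSpace Ω) (hB : mB ≤ m0) (hAB : mA ≤ mB)
    (h0 : condMutualInfo μ mA mB γ = 0) :
    ∀ C ∈ γ, condProb μ mB C =ᵐ[μ] condProb μ mA C := by
  intro C hC
  have hterms := (Finset.sum_eq_zero_iff_of_nonneg fun D hD ↦
    integral_condProb_mul_log_div_nonneg hAB hB (hγmeas D hD)).1 h0
  exact (integral_condProb_mul_log_div_eq_zero_iff hAB hB (hγmeas C hC)).1 (hterms C hC)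

/-- If the conditional mutual information `I(ℬ; γ | 𝒜)` vanishes, then for every `C ∈ γ`
the conditional probabilities agree: `P(C | ℬ) = P(C | 𝒜)` almost everywhere. -/
theorem condProb_ae_eq_of_condMutualInfo_eq_zero {Ω : Type*} [m0 : MeasurableSpace Ω]
    (μ : Measure Ω) [IsProbabilityMeasure μ]
    (γ : Finset (Set Ω))
    (hγmeas : ∀ C ∈ γ, MeasurableSet[m0] C)
    (hγdisj : (γ : Set (Set Ω)).PairwiseDisjoint id)
    (hγcover : ⋃₀ (γ : Set (Set Ω)) = Set.univ)
    (hγpos : ∀ C ∈ γ, 0 < μ C)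
    (mA mB : MeasurableSpace Ω) (hB : mB ≤ m0) (hAB : mA ≤ mB)
    (h0 : condMutualInfo μ mA mB γ = 0) :
    ∀ C ∈ γ, condProb μ mB C =ᵐ[μ] condProb μ mA C :=
  condProb_ae_eq_of_condMutualInfo_eq_zero_general μ γ hγmeas mA mB hB hAB h0
end

section
/- Let (X_i, 𝒳_i), i ∈ N = {1,…,n}, be measurable spaces and 𝒜 a sub-σ-algebra of the product σ-algebra 𝒳_N, with reduced family 𝒜̲_M := { A ∈ 𝒳_M : (π^N_M)^{-1}(A) ∈ 𝒜 }. If 𝒜'_M (M ⊆ N) is any family of sub-σ-algebras of 𝒳_M such that 𝒜'_M ⊆ tr_M(𝒜) for all M and π^M_L is 𝒜'_M-𝒜'_L-measurable for all L ⊆ M ⊆ N, then 𝒜'_M ⊆ 𝒜̲_M for all M ⊆ N; i.e., the reduction is the largest projective family contained in the family of M-traces. -/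
/-- The canonical projection `π^M_L : X_M → X_L` between partial products, for `L ⊆ M`. -/
def proj {n : ℕ} {X : Fin n → Type*} {L M : Finset (Fin n)} (h : L ⊆ M)
    (x : ∀ i : {j : Fin n // j ∈ M}, X i.1) (i : {j : Fin n // j ∈ L}) : X i.1 :=
  x ⟨i.1, h i.2⟩

/-- The canonical projection `π^N_M : X_N → X_M` from the full product. -/
def projFull {n : ℕ} {X : Fin n → Type*} (M : Finset (Fin n))
    (x : ∀ i, X i) (i : {j : Fin n // j ∈ M}) : X i.1 :=
  x i.1

/-- The reduced σ-algebra `𝒜̲_M := { A ∈ 𝒳_M : (π^N_M)⁻¹(A) ∈ 𝒜 }`. -/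
def redFam {n : ℕ} {X : Fin n → Type*} [∀ i, MeasurableSpace (X i)]
    (𝒜 : MeasurableSpace (∀ i, X i)) (M : Finset (Fin n)) :
    MeasurableSpace (∀ i : {j : Fin n // j ∈ M}, X i.1) :=
  MeasurableSpace.pi ⊓ MeasurableSpace.map (projFull M) 𝒜

/-- Combining `x ∈ X_M` with a context configuration `x̄ ∈ X_{N∖M}` into a full
configuration in `X_N`. -/
def combine {n : ℕ} {X : Fin n → Type*} (M : Finset (Fin n))
    (x : ∀ i : {j : Fin n // j ∈ M}, X i.1)
    (y : ∀ i : {j : Fin n // j ∈ Mᶜ}, X i.1) (i : Fin n) : X i :=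
  if h : i ∈ M then x ⟨i, h⟩ else y ⟨i, Finset.mem_compl.mpr h⟩

/-- The `M`-trace `tr_M(𝒜) := ⋁_{x̄ ∈ X_{N∖M}} tr_{M,x̄}(𝒜)`, where the `(M,x̄)`-trace
`tr_{M,x̄}(𝒜)` is the σ-algebra of `(M,x̄)`-sections of members of `𝒜`, i.e. the comap of
`𝒜` under `x ↦ (x, x̄)`. -/
def traceFam {n : ℕ} {X : Fin n → Type*}
    (𝒜 : MeasurableSpace (∀ i, X i)) (M : Finset (Fin n)) :
    MeasurableSpace (∀ i : {j : Fin n // j ∈ M}, X i.1) :=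
  ⨆ y : ∀ i : {j : Fin n // j ∈ Mᶜ}, X i.1,
    MeasurableSpace.comap (fun x => combine M x y) 𝒜

/-!
The only context for `M = N` is the empty one, so `tr_N(𝒜) = 𝒜`. Projectivity factors `π^N_M`
through the top level, where the family is contained in `tr_N(𝒜)`, so the cylinder in `X_N` over a
member of `𝒜'_M` lies in `𝒜 ⊆ 𝒳_N`. The member itself then lies in `𝒳_M`, being a section of this
cylinder.
-/

open scoped MeasureTheory

section

variable {n : ℕ} {X : Fin n → Type*}

theorem projFull_combine (M : Finset (Fin n)) (x : ∀ i : {j : Fin n // j ∈ M}, X i.1)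
    (y : ∀ i : {j : Fin n // j ∈ Mᶜ}, X i.1) : projFull M (combine M x y) = x :=
  funext fun i => dif_pos i.2

theorem combine_univ_projFull (x : ∀ i, X i)
    (y : ∀ i : {j : Fin n // j ∈ (Finset.univ : Finset (Fin n))ᶜ}, X i.1) :
    combine Finset.univ (projFull Finset.univ x) y = x :=
  funext fun i => dif_pos (Finset.mem_univ i)

theorem traceFam_univ_le_map_projFull (𝒜 : MeasurableSpace (∀ i, X i)) :
    traceFam 𝒜 Finset.univ ≤ 𝒜.map (projFull Finset.univ) := by
  refine iSup_le fun y => MeasurableSpace.comap_le_iff_le_map.mpr ?_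
  have combine_comp_projFull :
      (fun x => combine Finset.univ x y) ∘ projFull Finset.univ = id :=
    funext fun x => combine_univ_projFull x y
  rw [MeasurableSpace.map_comp, combine_comp_projFull, MeasurableSpace.map_id]

theorem measurable_combine_left [∀ i, MeasurableSpace (X i)] (M : Finset (Fin n))
    (y : ∀ i : {j : Fin n // j ∈ Mᶜ}, X i.1) : Measurable fun x => combine M x y := by
  refine measurable_pi_lambda _ fun i => ?_
  by_cases hi : i ∈ M
  · simpa only [combine, hi, dite_true] using measurable_pi_apply _
  · simpa only [combine, hi, dite_false] using measurable_const

theorem map_projFull_pi_le [∀ i, MeasurableSpace (X i)] (M : Finset (Fin n))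
    [Nonempty (∀ i : {j : Fin n // j ∈ Mᶜ}, X i.1)] :
    MeasurableSpace.pi.map (projFull (X := X) M) ≤ MeasurableSpace.pi := by
  intro s hs
  obtain ⟨y⟩ := ‹Nonempty (∀ i : {j : Fin n // j ∈ Mᶜ}, X i.1)›
  have section_cylinder : (fun x => combine M x y) ⁻¹' (projFull M ⁻¹' s) = s := by
    ext x
    rw [Set.mem_preimage, Set.mem_preimage, projFull_combine]
  exact section_cylinder ▸ measurable_combine_left M y hs

theorem redFam_eq_map_projFull [∀ i, MeasurableSpace (X i)] {𝒜 : MeasurableSpace (∀ i, X i)}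
    (h𝒜 : 𝒜 ≤ MeasurableSpace.pi) (M : Finset (Fin n))
    [Nonempty (∀ i : {j : Fin n // j ∈ Mᶜ}, X i.1)] :
    redFam 𝒜 M = 𝒜.map (projFull M) :=
  inf_eq_right.mpr <| (MeasurableSpace.map_mono h𝒜).trans (map_projFull_pi_le M)

theorem redFam_maximal_general [∀ i, MeasurableSpace (X i)] [∀ i, Nonempty (X i)]
    (𝒜 : MeasurableSpace (∀ i, X i)) (h𝒜 : 𝒜 ≤ MeasurableSpace.pi)
    (A' : (M : Finset (Fin n)) → MeasurableSpace (∀ i : {j : Fin n // j ∈ M}, X i.1))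
    (hA'trace : A' Finset.univ ≤ traceFam 𝒜 Finset.univ)
    (hA'proj : ∀ M, Measurable[A' Finset.univ, A' M] (proj (Finset.subset_univ M))) :
    ∀ M, A' M ≤ redFam 𝒜 M := by
  intro M
  have measurable_projFull_univ : Measurable[𝒜, A' Finset.univ] (projFull Finset.univ) :=
    measurable_iff_le_map.mpr (hA'trace.trans (traceFam_univ_le_map_projFull 𝒜))
  have measurable_projFull : Measurable[𝒜, A' M] (projFull M) :=
    (hA'proj M).comp measurable_projFull_univ
  rw [redFam_eq_map_projFull h𝒜]
  exact measurable_iff_le_map.mp measurable_projFull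

end

/-- Maximality of the projective reduction: if `𝒜'_M` is any family of sub-σ-algebras
with `𝒜'_M ⊆ tr_M(𝒜)` for all `M` such that all canonical projections `π^M_L` are
`𝒜'_M`-`𝒜'_L`-measurable, then `𝒜'_M ⊆ 𝒜̲_M` for all `M`; i.e. the reduction is the
largest projective family contained in the family of `M`-traces. -/
theorem redFam_maximal {n : ℕ} {X : Fin n → Type*}
    [∀ i, MeasurableSpace (X i)] [∀ i, Nonempty (X i)]
    (𝒜 : MeasurableSpace (∀ i, X i)) (h𝒜 : 𝒜 ≤ MeasurableSpace.pi)
    (A' : (M : Finset (Fin n)) → MeasurableSpace (∀ i : {j : Fin n // j ∈ M}, X i.1))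
    (hA'trace : ∀ M, A' M ≤ traceFam 𝒜 M)
    (hA'proj : ∀ (L M : Finset (Fin n)) (h : L ⊆ M),
      @Measurable _ _ (A' M) (A' L) (proj h)) :
    ∀ M, A' M ≤ redFam 𝒜 M := by
  exact redFam_maximal_general 𝒜 h𝒜 A' (hA'trace _) fun M => hA'proj M _ (Finset.subset_univ M)
end

section
/- Let 𝖷, 𝖸, 𝖹 be finite sets, p a probability distribution on 𝖷 × 𝖸 × 𝖹 with p(z) > 0 for all z, and α a partition of 𝖷 with p(A) > 0 for every block A ∈ α. For x ∈ 𝖷, let A_x be the block of α containing x, and define p̂(z|x) := ∑_{x' ∈ A_x} p(x'|A_x) p(z|x') (where p(z|x') is the conditional of z given x', and the inner conditionals are assumed well defined, i.e. p(x) > 0 and p(x,y) > 0 on the support). Then the chain rule holds: ∑_{x,y,z} p(x,y,z) log( p(z|x,y)/p(z) ) = ∑_{x} p(x) ∑_{z} p̂(z|x) log( p̂(z|x)/p(z) ) + ∑_{x,y} p(x,y) ∑_{z} p(z|x,y) log( p(z|x,y)/p̂(z|x) ), i.e., I(X,Y;Z) = I(X→Z) + I(Y→Z|X), with the convention 0·log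 0 = 0. -/
open Finset

variable {X Y Z : Type*}

/-- Marginal `p(x)`. -/
def pX [Fintype Y] [Fintype Z] (p : X → Y → Z → ℝ) (x : X) : ℝ := ∑ y, ∑ z, p x y z

/-- Marginal `p(x,y)`. -/
def pXY [Fintype Z] (p : X → Y → Z → ℝ) (x : X) (y : Y) : ℝ := ∑ z, p x y z

/-- Marginal `p(z)`. -/
def pZ [Fintype X] [Fintype Y] (p : X → Y → Z → ℝ) (z : Z) : ℝ := ∑ x, ∑ y, p x y z

/-- Conditional `p(z|x,y) = p(x,y,z)/p(x,y)`. -/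
noncomputable def pZXY [Fintype Z] (p : X → Y → Z → ℝ) (x : X) (y : Y) (z : Z) : ℝ :=
  p x y z / pXY p x y

/-- Conditional `p(z|x) = ∑_y p(y|x) p(z|x,y)`. -/
noncomputable def pZX [Fintype Y] [Fintype Z] (p : X → Y → Z → ℝ) (x : X) (z : Z) : ℝ :=
  ∑ y, (pXY p x y / pX p x) * pZXY p x y z

/-- Probability `p(A_x)` of the block of the partition `α` containing `x`, where
`A : X → Finset X` sends each point to its block. -/
def pBlock [Fintype Y] [Fintype Z] (p : X → Y → Z → ℝ) (A : X → Finset X) (x : X) : ℝ :=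
  ∑ x' ∈ A x, pX p x'

/-- The coarsened conditional `p̂(z|x) := ∑_{x' ∈ A_x} p(x'|A_x) p(z|x')`. -/
noncomputable def pHat [Fintype Y] [Fintype Z] (p : X → Y → Z → ℝ) (A : X → Finset X)
    (x : X) (z : Z) : ℝ :=
  ∑ x' ∈ A x, (pX p x' / pBlock p A x) * pZX p x' z

/-!
The coarsened conditional `p̂(z|x)` is the block average `p(A_x, z) / p(A_x)`. Averaging over blocks
preserves integrals of functions constant on blocks, and `log (p̂(z|x) / p(z))` is, for each `z`,
such a function. So all three terms are expectations under the same `p(x,y,z)`, and the identity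
reduces to splitting `log (p(z|x,y) / p(z))` at `p̂(z|x)`, which is positive wherever `p(x,y,z)` is.
-/

/-- `A` is the block map of a partition of `X`: it sends each point to the block containing it. -/
structure IsBlockMap (A : X → Finset X) : Prop where
  mem_self : ∀ x, x ∈ A x
  eq_of_mem : ∀ {x x'}, x' ∈ A x → A x' = A x

namespace IsBlockMap

variable {A : X → Finset X}

theorem mem_comm (hA : IsBlockMap A) {x x' : X} : x' ∈ A x ↔ x ∈ A x' :=
  ⟨fun h => hA.eq_of_mem h ▸ hA.mem_self x, fun h => hA.eq_of_mem h ▸ hA.mem_self x'⟩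

theorem sum_sum_comm {M : Type*} [AddCommMonoid M] [Fintype X] (hA : IsBlockMap A)
    (f : X → X → M) : ∑ x, ∑ x' ∈ A x, f x x' = ∑ x', ∑ x ∈ A x', f x x' :=
  sum_comm' fun _ _ => by simpa only [mem_univ, true_and, and_true] using hA.mem_comm

theorem sum_mul_blockAverage_mul {K : Type*} [Field K] [Fintype X] (hA : IsBlockMap A)
    {w : X → K} (hw : ∀ x, ∑ x' ∈ A x, w x' ≠ 0) (f : X → K) {g : X → K}
    (hg : ∀ x, ∀ x' ∈ A x, g x' = g x) :
    ∑ x, w x * ((∑ x' ∈ A x, f x') / (∑ x' ∈ A x, w x') * g x) = ∑ x, f x * g x := by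
  calc ∑ x, w x * ((∑ x' ∈ A x, f x') / (∑ x' ∈ A x, w x') * g x)
      = ∑ x, ∑ x' ∈ A x, w x * (f x' / (∑ a ∈ A x, w a) * g x) := by
        simp only [sum_div, sum_mul, mul_sum]
    _ = ∑ x', ∑ x ∈ A x', w x * (f x' / (∑ a ∈ A x, w a) * g x) := hA.sum_sum_comm _
    _ = ∑ x', ∑ x ∈ A x', w x * (f x' / (∑ a ∈ A x', w a) * g x') :=
        sum_congr rfl fun x' _ => sum_congr rfl fun x hx => by
          rw [hA.eq_of_mem hx, hg x' x hx]
    _ = ∑ x', f x' * g x' := sum_congr rfl fun x' _ => by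
        rw [← sum_mul, ← mul_assoc, mul_div_cancel₀ _ (hw x')]

end IsBlockMap

section Conditionals

variable [Fintype Z] {p : X → Y → Z → ℝ}

theorem pXY_mul_sum_pZXY_mul {x : X} {y : Y} (hxy : pXY p x y ≠ 0) (g : Z → ℝ) :
    pXY p x y * ∑ z, pZXY p x y z * g z = ∑ z, p x y z * g z := by
  simp only [mul_sum, ← mul_assoc, pZXY, mul_div_cancel₀ _ hxy]

variable [Fintype Y] {A : X → Finset X}

theorem pZX_eq_sum_div_pX {x : X} (hxy : ∀ y, pXY p x y ≠ 0) (z : Z) :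
    pZX p x z = (∑ y, p x y z) / pX p x := by
  rw [pZX, sum_div]
  refine sum_congr rfl fun y _ => ?_
  rw [pZXY, div_mul_div_comm, mul_comm (pX p x), mul_div_mul_left _ _ (hxy y)]

theorem pHat_eq_sum_div_pBlock (hpx : ∀ x, pX p x ≠ 0) (hpxy : ∀ x y, pXY p x y ≠ 0)
    (x : X) (z : Z) :
    pHat p A x z = (∑ x' ∈ A x, ∑ y, p x' y z) / pBlock p A x := by
  rw [pHat, sum_div]
  refine sum_congr rfl fun x' _ => ?_
  rw [pZX_eq_sum_div_pX (hpxy x'), div_mul_div_comm, mul_comm (pBlock p A x),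
    mul_div_mul_left _ _ (hpx x')]

theorem pHat_eq_of_mem (hA : IsBlockMap A) {x x' : X} (h : x' ∈ A x) (z : Z) :
    pHat p A x' z = pHat p A x z := by
  simp only [pHat, pBlock, hA.eq_of_mem h]

theorem pBlock_pos (hA : IsBlockMap A) (hpx : ∀ x, 0 < pX p x) (x : X) : 0 < pBlock p A x :=
  sum_pos (fun x' _ => hpx x') ⟨x, hA.mem_self x⟩

theorem pHat_pos_of_pos (hp0 : ∀ x y z, 0 ≤ p x y z) (hA : IsBlockMap A)
    (hpx : ∀ x, 0 < pX p x) (hpxy : ∀ x y, 0 < pXY p x y) {x : X} {y : Y} {z : Z}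
    (hxyz : 0 < p x y z) : 0 < pHat p A x z := by
  rw [pHat_eq_sum_div_pBlock (fun x => (hpx x).ne') (fun x y => (hpxy x y).ne')]
  have hxz : 0 < ∑ y, p x y z := sum_pos' (fun y _ => hp0 x y z) ⟨y, mem_univ y, hxyz⟩
  have hAz : 0 < ∑ x' ∈ A x, ∑ y, p x' y z :=
    sum_pos' (fun x' _ => sum_nonneg fun y _ => hp0 x' y z) ⟨x, hA.mem_self x, hxz⟩
  exact div_pos hAz (pBlock_pos hA hpx x)

theorem sum_pX_mul_sum_pHat_mul [Fintype X] (hA : IsBlockMap A) (hpx : ∀ x, 0 < pX p x)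
    (hpxy : ∀ x y, pXY p x y ≠ 0) {g : X → Z → ℝ} (hg : ∀ x, ∀ x' ∈ A x, ∀ z, g x' z = g x z) :
    ∑ x, pX p x * ∑ z, pHat p A x z * g x z = ∑ x, ∑ y, ∑ z, p x y z * g x z := by
  calc ∑ x, pX p x * ∑ z, pHat p A x z * g x z
      = ∑ z, ∑ x, pX p x * (pHat p A x z * g x z) := by
        simp only [mul_sum]
        exact sum_comm
    _ = ∑ z, ∑ x, (∑ y, p x y z) * g x z := sum_congr rfl fun z _ => by
        simp only [pHat_eq_sum_div_pBlock (fun x => (hpx x).ne') hpxy]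
        exact hA.sum_mul_blockAverage_mul (fun x => (pBlock_pos hA hpx x).ne') _
          fun x x' h => hg x x' h z
    _ = ∑ x, ∑ z, ∑ y, p x y z * g x z := by
        simp only [sum_mul]
        exact sum_comm
    _ = ∑ x, ∑ y, ∑ z, p x y z * g x z := sum_congr rfl fun x _ => sum_comm

end Conditionals

theorem mul_log_div_eq_add {m a b c : ℝ} (ha : m ≠ 0 → a ≠ 0) (hb : m ≠ 0 → b ≠ 0)
    (hc : c ≠ 0) :
    m * Real.log (a / c) = m * Real.log (b / c) + m * Real.log (a / b) := by
  obtain rfl | hm := eq_or_ne m 0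
  · simp only [zero_mul, add_zero]
  · rw [Real.log_div (ha hm) hc, Real.log_div (hb hm) hc, Real.log_div (ha hm) (hb hm)]
    ring

theorem causal_chain_rule_two_inputs_general
    [Fintype X] [Fintype Y] [Fintype Z]
    {p : X → Y → Z → ℝ} (hp0 : ∀ x y z, 0 ≤ p x y z)
    {A : X → Finset X} (hA : IsBlockMap A)
    {r : Z → ℝ} (hr : ∀ z, 0 < r z)
    (hpx : ∀ x, 0 < pX p x) (hpxy : ∀ x y, 0 < pXY p x y) :
    ∑ x, ∑ y, ∑ z, p x y z * Real.log (pZXY p x y z / r z)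
      = (∑ x, pX p x * ∑ z, pHat p A x z * Real.log (pHat p A x z / r z))
        + ∑ x, ∑ y, pXY p x y *
            ∑ z, pZXY p x y z * Real.log (pZXY p x y z / pHat p A x z) := by
  have hlog_const : ∀ x, ∀ x' ∈ A x, ∀ z,
      Real.log (pHat p A x' z / r z) = Real.log (pHat p A x z / r z) := fun x x' h z => by
    rw [pHat_eq_of_mem hA h]
  rw [sum_pX_mul_sum_pHat_mul hA hpx (fun x y => (hpxy x y).ne') hlog_const]
  simp only [pXY_mul_sum_pZXY_mul (hpxy _ _).ne', ← sum_add_distrib]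
  exact sum_congr rfl fun x _ => sum_congr rfl fun y _ => sum_congr rfl fun z _ =>
    mul_log_div_eq_add (fun h => div_ne_zero h (hpxy x y).ne')
      (fun h => (pHat_pos_of_pos hp0 hA hpx hpxy ((hp0 x y z).lt_of_ne' h)).ne') (hr z).ne'

/-- Causal chain rule in the finite two-input case: for a joint distribution `p` on
`𝖷 × 𝖸 × 𝖹` and a partition `α` of `𝖷` (given by its block map `A`), one has
`I(X,Y;Z) = I(X→Z) + I(Y→Z|X)`, i.e.
`∑_{x,y,z} p(x,y,z) log(p(z|x,y)/p(z))
  = ∑_x p(x) ∑_z p̂(z|x) log(p̂(z|x)/p(z))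
    + ∑_{x,y} p(x,y) ∑_z p(z|x,y) log(p(z|x,y)/p̂(z|x))`
(with the convention `0 · log 0 = 0`; in Lean `log 0 = 0` and `r / 0 = 0`). -/
theorem causal_chain_rule_two_inputs
    [Fintype X] [Fintype Y] [Fintype Z] [DecidableEq X]
    (p : X → Y → Z → ℝ)
    (hp0 : ∀ x y z, 0 ≤ p x y z)
    (hp1 : ∑ x, ∑ y, ∑ z, p x y z = 1)
    (A : X → Finset X)
    (hA_mem : ∀ x, x ∈ A x)
    (hA_part : ∀ x x', x' ∈ A x → A x' = A x)
    (hpz : ∀ z, 0 < pZ p z)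
    (hpx : ∀ x, 0 < pX p x)
    (hpxy : ∀ x y, 0 < pXY p x y)
    (hpA : ∀ x, 0 < pBlock p A x) :
    ∑ x, ∑ y, ∑ z, p x y z * Real.log (pZXY p x y z / pZ p z)
      = (∑ x, pX p x * ∑ z, pHat p A x z * Real.log (pHat p A x z / pZ p z))
        + ∑ x, ∑ y, pXY p x y *
            ∑ z, pZXY p x y z * Real.log (pZXY p x y z / pHat p A x z) :=
  causal_chain_rule_two_inputs_general hp0 ⟨hA_mem, hA_part _ _⟩ hpz hpx hpxy
end

section
/- Consider the Markov transition kernel on {±1}² given by p(x',y' | x,y) = p(x'|x,y) · p(y'|x,y) with p(x'|x,y) = 1/(1 + e^{2βx'y}) and p(y'|x,y) = 1/(1 + e^{2βy'y}), for a real parameter β. Set a = 1/(1+e^{2β}) and b = 1/(1+e^{−2β}). Then the probability distribution π on {±1}² given by π(+1,+1) = π(−1,−1) = 1/2 − ab and π(+1,−1) = π(−1,+1) = ab is stationary for this kernel; i.e., ∑_{(x,y)} π(x,y) p(x',y'|x,y) = π(x',y') for all (x',y') ∈ {±1}². -/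
/-!
Given `y`, the coordinates `x'` and `y'` are drawn independently from the same kernel `p(· | y)`,
and the old `x` plays no role. Hence if `μ` is stationary for `p`, the law
`∑ z, μ z * p(x | z) * p(y | z)` of two conditionally independent draws is stationary for the pair
chain: its second marginal is again `μ`. Here `p` is a binary symmetric channel, `μ` is uniform,
and `a + b = 1` turns `(a ^ 2 + b ^ 2) / 2` into `1 / 2 - a * b`.
-/

open Finset

section CondIndepLaw

variable {ι ι' κ R : Type*} [NonAssocSemiring R] {s : Finset ι} {t : Finset κ}
  {μ : κ → R} {k : κ → ι → R}

/-- The joint law of a pair `(x, y)` whose coordinates are drawn independently from `k z` and `l z`,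
where the common parent `z` has law `μ` on `t`. The conditioning variable is the first argument of
a kernel: `k z x` is the probability of `x` given `z`. -/
def condIndepLaw (t : Finset κ) (μ : κ → R) (k : κ → ι → R) (l : κ → ι' → R)
    (x : ι) (y : ι') : R :=
  ∑ z ∈ t, μ z * (k z x * l z y)

theorem sum_condIndepLaw_left {l : κ → ι' → R}
    (hk : ∀ z ∈ t, ∑ x ∈ s, k z x = 1) (y : ι') :
    ∑ x ∈ s, condIndepLaw t μ k l x y = ∑ z ∈ t, μ z * l z y := by
  simp only [condIndepLaw]
  rw [sum_comm]
  refine sum_congr rfl fun z hz => ?_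
  rw [← mul_sum, ← sum_mul, hk z hz, one_mul]

theorem condIndepLaw_stationary {l : κ → κ → R} (hk : ∀ z ∈ t, ∑ x ∈ s, k z x = 1)
    (hμ : ∀ y ∈ t, ∑ z ∈ t, μ z * l z y = μ y) (x' : ι) (y' : κ) :
    ∑ x ∈ s, ∑ y ∈ t, condIndepLaw t μ k l x y * (k y x' * l y y') =
      condIndepLaw t μ k l x' y' := by
  rw [sum_comm]
  refine sum_congr rfl fun y hy => ?_
  rw [← sum_mul, sum_condIndepLaw_left hk, hμ y hy]

end CondIndepLaw

section SymmetricChannel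

variable {ι R : Type*} [DecidableEq ι]

/-- The symmetric channel of information theory: the input symbol `z` is kept with probability `a`
and turned into each given other symbol with probability `b`. On `n` symbols the rows sum to one
exactly when `a + (n - 1) * b = 1`. -/
def symmetricChannel (a b : R) (z x : ι) : R :=
  if z = x then a else b

theorem symmetricChannel_comm (a b : R) (z x : ι) :
    symmetricChannel a b z x = symmetricChannel a b x z := by
  simp only [symmetricChannel, eq_comm]

theorem symmetricChannel_eq_add_ite [AddCommGroup R] (a b : R) (z x : ι) :
    symmetricChannel a b z x = b + if z = x then a - b else 0 := by
  unfold symmetricChannel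
  split_ifs <;> abel

theorem sum_symmetricChannel [NonAssocRing R] {S : Finset ι} {z : ι} (hz : z ∈ S) (a b : R) :
    ∑ x ∈ S, symmetricChannel a b z x = #S * b + (a - b) := by
  simp [symmetricChannel_eq_add_ite, sum_add_distrib, hz]

theorem sum_symmetricChannel_of_card_eq_two [NonAssocRing R] {S : Finset ι} (hS : #S = 2) {a b : R}
    (hab : a + b = 1) {z : ι} (hz : z ∈ S) :
    ∑ x ∈ S, symmetricChannel a b z x = 1 := by
  rw [sum_symmetricChannel hz, hS, Nat.cast_ofNat, two_mul, ← hab]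
  abel

theorem sum_symmetricChannel_mul [CommRing R] {S : Finset ι} {x y : ι} (hx : x ∈ S) (hy : y ∈ S)
    (a b : R) :
    ∑ z ∈ S, symmetricChannel a b z x * symmetricChannel a b z y =
      #S * b ^ 2 + 2 * b * (a - b) + if x = y then (a - b) ^ 2 else 0 := by
  simp only [symmetricChannel_eq_add_ite, add_mul, mul_add, ite_mul, mul_ite, zero_mul, mul_zero,
    sum_add_distrib, sum_const, nsmul_eq_mul, sum_ite_eq', hx, hy, if_true, ← sq,
    eq_comm (a := y) (b := x)]
  ring

end SymmetricChannel

section BinaryChannel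

variable {ι K : Type*} [DecidableEq ι] [Field K] {S : Finset ι} {a b : K}

theorem condIndepLaw_symmetricChannel_of_card_eq_two [NeZero (2 : K)] (hS : #S = 2)
    (hab : a + b = 1) {x y : ι} (hx : x ∈ S) (hy : y ∈ S) :
    condIndepLaw S (fun _ => 1 / 2) (symmetricChannel a b) (symmetricChannel a b) x y =
      if x = y then 1 / 2 - a * b else a * b := by
  obtain rfl : b = 1 - a := eq_sub_of_add_eq' hab
  rw [condIndepLaw, ← mul_sum, sum_symmetricChannel_mul hx hy, hS]
  push_cast
  split_ifs <;> field_simp <;> ring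

theorem stationary_distribution_copy_chain_general [NeZero (2 : K)] (hS : #S = 2)
    (hab : a + b = 1) {p w : ι → ι → K}
    (hp : ∀ x ∈ S, ∀ y ∈ S, p x y = if x = y then a else b)
    (hw : ∀ x ∈ S, ∀ y ∈ S, w x y = if x = y then 1 / 2 - a * b else a * b) :
    ∀ x' ∈ S, ∀ y' ∈ S, ∑ x ∈ S, ∑ y ∈ S, w x y * (p x' y * p y' y) = w x' y' := by
  intro x' hx' y' hy'
  have p_eq : ∀ x ∈ S, ∀ y ∈ S, p x y = symmetricChannel a b y x := fun x hx y hy =>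
    (hp x hx y hy).trans (symmetricChannel_comm a b x y)
  have w_eq : ∀ x ∈ S, ∀ y ∈ S, w x y =
      condIndepLaw S (fun _ => 1 / 2) (symmetricChannel a b) (symmetricChannel a b) x y :=
    fun x hx y hy =>
      (hw x hx y hy).trans (condIndepLaw_symmetricChannel_of_card_eq_two hS hab hx hy).symm
  have uniform_stationary : ∀ y ∈ S, ∑ z ∈ S, 1 / 2 * symmetricChannel a b z y = 1 / 2 := by
    intro y hy
    simp only [symmetricChannel_comm a b _ y]
    rw [← mul_sum, sum_symmetricChannel_of_card_eq_two hS hab hy, mul_one]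
  rw [w_eq x' hx' y' hy', ← condIndepLaw_stationary
    (fun _ => sum_symmetricChannel_of_card_eq_two hS hab) uniform_stationary]
  refine sum_congr rfl fun x hx => sum_congr rfl fun y hy => ?_
  rw [w_eq x hx y hy, p_eq x' hx' y hy, p_eq y' hy' y hy]

end BinaryChannel

theorem one_div_one_add_exp_add_one_div_one_add_exp_neg (t : ℝ) :
    1 / (1 + Real.exp t) + 1 / (1 + Real.exp (-t)) = 1 := by
  simp only [one_div, ← Real.sigmoid_def]
  have exp_sigmoid : (1 + Real.exp t)⁻¹ = Real.sigmoid (-t) := by rw [Real.sigmoid_def, neg_neg]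
  rw [exp_sigmoid, Real.sigmoid_neg, sub_add_cancel]

theorem one_div_one_add_exp_mul_spin (t : ℝ) {u v : ℤ} (hu : u ∈ ({-1, 1} : Finset ℤ))
    (hv : v ∈ ({-1, 1} : Finset ℤ)) :
    1 / (1 + Real.exp (t * u * v)) =
      if u = v then 1 / (1 + Real.exp t) else 1 / (1 + Real.exp (-t)) := by
  simp only [mem_insert, mem_singleton] at hu hv
  rcases hu with rfl | rfl <;> rcases hv with rfl | rfl <;> norm_num

/-- For the Markov transition kernel on `{±1}²` given by
`p(x',y'|x,y) = p(x'|x,y) · p(y'|x,y)` with `p(x'|x,y) = 1/(1+e^{2βx'y})` and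
`p(y'|x,y) = 1/(1+e^{2βy'y})`, the distribution `π` with
`π(+1,+1) = π(−1,−1) = 1/2 − ab` and `π(+1,−1) = π(−1,+1) = ab`, where
`a = 1/(1+e^{2β})` and `b = 1/(1+e^{−2β})`, is stationary:
`∑_{(x,y)} π(x,y) p(x',y'|x,y) = π(x',y')` for all `(x',y') ∈ {±1}²`. -/
theorem stationary_distribution_copy_chain (β : ℝ)
    (S : Finset ℤ) (hS : S = {-1, 1})
    (a b : ℝ)
    (ha : a = 1 / (1 + Real.exp (2 * β)))
    (hb : b = 1 / (1 + Real.exp (-(2 * β))))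
    (w : ℤ → ℤ → ℝ)
    (hw : ∀ x y, w x y = if x = y then 1 / 2 - a * b else a * b) :
    ∀ x' ∈ S, ∀ y' ∈ S,
      (∑ x ∈ S, ∑ y ∈ S, w x y *
          ((1 / (1 + Real.exp (2 * β * (x' : ℝ) * (y : ℝ)))) *
            (1 / (1 + Real.exp (2 * β * (y' : ℝ) * (y : ℝ))))))
        = w x' y' := by
  subst hS ha hb
  exact stationary_distribution_copy_chain_general (by decide)
    (one_div_one_add_exp_add_one_div_one_add_exp_neg (2 * β))
    (fun _ hu _ hv => one_div_one_add_exp_mul_spin (2 * β) hu hv) (fun x _ y _ => hw x y)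
end
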